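/- Let n ≥ 2 and let κ, μ ∈ ℝⁿ both lie in the Gårding cone Γ₂ with σ₂(κ) = σ₂(μ). Then σ₂(κ) − σ_{1,1}(κ, μ) ≤ 0, and equality σ₂(κ) = σ_{1,1}(κ, μ) holds if and only if κ = μ. -/

import Mathlib

open Finset

/-- First elementary symmetric polynomial: σ₁(κ) = ∑ i, κ i. -/
noncomputable def sigma1 {n : ℕ} (κ : Fin n → ℝ) : ℝ := ∑ i, κ i

/-- Second elementary symmetric polynomial: σ₂(κ) = ∑_{i<j} κ i * κ j. -/
noncomputable def sigma2 {n : ℕ} (κ : Fin n → ℝ) : ℝ :=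
  ∑ p ∈ Finset.univ.filter (fun p : Fin n × Fin n => p.1 < p.2), κ p.1 * κ p.2

/-- Polarization of σ₂: σ_{1,1}(κ, μ) = (1/2)(σ₁(κ)σ₁(μ) − ∑ i, κ i * μ i). -/
noncomputable def sigma11 {n : ℕ} (κ μ : Fin n → ℝ) : ℝ :=
  (1 / 2) * (sigma1 κ * sigma1 μ - ∑ i, κ i * μ i)

lemma two_sigma2 {n : ℕ} (κ : Fin n → ℝ) :
    2 * sigma2 κ = sigma1 κ ^ 2 - ∑ i, κ i ^ 2 := by
  have h1 : sigma2 κ = ∑ i, ∑ j, if i < j then κ i * κ j else 0 := by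
    unfold sigma2
    rw [Finset.sum_filter, Fintype.sum_prod_type]
  have h2 : sigma2 κ = ∑ i, ∑ j, if j < i then κ i * κ j else 0 := by
    rw [h1, Finset.sum_comm]
    simp only [mul_comm]
  have h3 : ∑ i, κ i ^ 2 = ∑ i, ∑ j, if i = j then κ i * κ j else 0 := by
    simp [pow_two]
  have h4 : sigma1 κ ^ 2 = ∑ i, ∑ j, κ i * κ j := by
    unfold sigma1
    rw [pow_two, Finset.sum_mul_sum]
  have h5 : sigma2 κ + sigma2 κ + ∑ i, κ i ^ 2 = sigma1 κ ^ 2 := by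
    rw [h4, h3]
    nth_rewrite 1 [h1]
    rw [h2]
    simp only [← Finset.sum_add_distrib]
    refine Finset.sum_congr rfl fun i _ => Finset.sum_congr rfl fun j _ => ?_
    rcases lt_trichotomy i j with h | h | h
    · simp [h, h.ne, h.not_gt]
    · simp [h]
    · simp [h, h.ne', h.not_gt]
  linarith

/-- For κ, μ ∈ Γ₂ with σ₂(κ) = σ₂(μ): σ₂(κ) − σ_{1,1}(κ, μ) ≤ 0, with
    equality if and only if κ = μ. -/
theorem garding_lemma {n : ℕ} (hn : 2 ≤ n) (κ μ : Fin n → ℝ)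
    (hκ1 : sigma1 κ > 0) (hκ2 : sigma2 κ > 0)
    (hμ1 : sigma1 μ > 0) (hμ2 : sigma2 μ > 0)
    (hσ : sigma2 κ = sigma2 μ) :
    sigma2 κ - sigma11 κ μ ≤ 0 ∧ (sigma2 κ = sigma11 κ μ ↔ κ = μ) := by
  have hK := two_sigma2 κ
  have hM := two_sigma2 μ
  have hC : 2 * sigma11 κ μ = sigma1 κ * sigma1 μ - ∑ i, κ i * μ i := by
    unfold sigma11; ring
  have hD : ∑ i, (sigma1 μ * κ i - sigma1 κ * μ i) ^ 2
      = sigma1 μ ^ 2 * ∑ i, κ i ^ 2 - 2 * sigma1 κ * sigma1 μ * ∑ i, κ i * μ i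
        + sigma1 κ ^ 2 * ∑ i, μ i ^ 2 := by
    rw [Finset.mul_sum, Finset.mul_sum, Finset.mul_sum, ← Finset.sum_sub_distrib,
      ← Finset.sum_add_distrib]
    exact Finset.sum_congr rfl fun i _ => by ring
  have hD0 : 0 ≤ ∑ i, (sigma1 μ * κ i - sigma1 κ * μ i) ^ 2 :=
    Finset.sum_nonneg fun i _ => sq_nonneg _
  have hA : ∑ i, κ i ^ 2 = sigma1 κ ^ 2 - 2 * sigma2 κ := by linarith
  have hB : ∑ i, μ i ^ 2 = sigma1 μ ^ 2 - 2 * sigma2 κ := by linarith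
  have hE : ∑ i, κ i * μ i = sigma1 κ * sigma1 μ - 2 * sigma11 κ μ := by linarith
  have key : ∑ i, (sigma1 μ * κ i - sigma1 κ * μ i) ^ 2
      + 2 * sigma2 κ * (sigma1 κ - sigma1 μ) ^ 2
      = 4 * (sigma1 κ * sigma1 μ) * (sigma11 κ μ - sigma2 κ) := by
    rw [hD, hA, hB, hE]; ring
  have hST : 0 < sigma1 κ * sigma1 μ := mul_pos hκ1 hμ1
  have hQ : 0 ≤ 2 * sigma2 κ * (sigma1 κ - sigma1 μ) ^ 2 := by positivity
  refine ⟨?_, ?_, ?_⟩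
  · by_contra hlt
    have : 0 < 4 * (sigma1 κ * sigma1 μ) * (sigma2 κ - sigma11 κ μ) :=
      mul_pos (by linarith) (by linarith)
    linarith
  · intro h
    have hz : sigma11 κ μ - sigma2 κ = 0 := by linarith
    rw [hz, mul_zero] at key
    have q0 : 2 * sigma2 κ * (sigma1 κ - sigma1 μ) ^ 2 = 0 := by linarith
    have d0 : ∑ i, (sigma1 μ * κ i - sigma1 κ * μ i) ^ 2 = 0 := by linarith
    have hs : sigma1 κ = sigma1 μ := by
      rcases mul_eq_zero.mp q0 with h' | h'
      · linarith
      · exact sub_eq_zero.mp (pow_eq_zero_iff two_ne_zero |>.mp h')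
    rw [Finset.sum_eq_zero_iff_of_nonneg fun i _ => sq_nonneg _] at d0
    funext i
    have := pow_eq_zero_iff two_ne_zero |>.mp (d0 i (Finset.mem_univ i))
    rw [hs] at this
    exact mul_left_cancel₀ hμ1.ne' (sub_eq_zero.mp this)
  · intro h
    subst h
    have : ∑ i, κ i * κ i = ∑ i, κ i ^ 2 := Finset.sum_congr rfl fun i _ => by ring
    nlinarith
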